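/- arXiv:2002.00946 — 2 statements merged into one kernel-verified Lean document; each statement's English description precedes it below -/
import Mathlib

section
/- Let m, n_1, ..., n_m be positive integers and p_1, ..., p_m ∈ [1, ∞]. There exists a constant C > 0 depending only on m such that there is a choice of signs ε_{j_1,...,j_m} ∈ {−1, 1} for which the m-linear form A : ℓ_{p_1}^{n_1} × ⋯ × ℓ_{p_m}^{n_m} → 𝕂 defined by A(z^{(1)}, ..., z^{(m)}) = Σ_{j_1=1}^{n_1} ⋯ Σ_{j_m=1}^{n_m} ε_{j_1,...,j_m} z_{j_1}^{(1)} ⋯ z_{j_m}^{(m)} satisfies ‖A‖ ≤ C · (Σ_{k=1}^m n_k)^{1/ρ} · Π_{k=1}^m n_k^{max{1/2 − 1/p_k, 0}}, where ρ := min_{1≤k≤m} max{2, p_k*} and p_k* is the conjugate exponent of p_k. -/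
open scoped BigOperators ENNReal

noncomputable section

/-- The `ℓ_p` norm on `𝕂^n`, for `p ∈ [1, ∞]` (sup norm when `p = ∞`). -/
def lpNorm {𝕂 : Type*} [RCLike 𝕂] (p : ℝ≥0∞) {n : ℕ} (x : Fin n → 𝕂) : ℝ :=
  if p = ∞ then ⨆ j, ‖x j‖ else (∑ j, ‖x j‖ ^ p.toReal) ^ (1 / p.toReal)

/-- The operator norm of an `m`-linear form `A : ℓ_{p 1}^{n 1} × ⋯ × ℓ_{p m}^{n m} → 𝕂`,
i.e. the supremum of `‖A x‖` over all `x` with `‖x k‖_{p k} ≤ 1` for every `k`. -/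
def opNorm {𝕂 : Type*} [RCLike 𝕂] {m : ℕ} {n : Fin m → ℕ} (p : Fin m → ℝ≥0∞)
    (A : MultilinearMap 𝕂 (fun k => Fin (n k) → 𝕂) 𝕂) : ℝ :=
  sSup {t | ∃ x : ∀ k, Fin (n k) → 𝕂, (∀ k, lpNorm (p k) (x k) ≤ 1) ∧ t = ‖A x‖}

/-- A multilinear form is unimodular if all its coefficients `A (e_{j 1}, …, e_{j m})`
have modulus 1. -/
def Unimodular {𝕂 : Type*} [RCLike 𝕂] {m : ℕ} {n : Fin m → ℕ}
    (A : MultilinearMap 𝕂 (fun k => Fin (n k) → 𝕂) 𝕂) : Prop :=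
  ∀ j : ∀ k, Fin (n k), ‖A (fun k => Pi.single (j k) 1)‖ = 1

/-- The `m`-linear form `z ↦ ∑_j c j • z^{(1)}_{j 1} ⋯ z^{(m)}_{j m}` determined by the
coefficients `c`. -/
def coeffForm {𝕂 : Type*} [RCLike 𝕂] {m : ℕ} {n : Fin m → ℕ} (c : (∀ k, Fin (n k)) → 𝕂) :
    MultilinearMap 𝕂 (fun k => Fin (n k) → 𝕂) 𝕂 :=
  ∑ j : ∀ k, Fin (n k), (MultilinearMap.mkPiRing 𝕂 (Fin m) (c j)).compLinearMap
    fun k => LinearMap.proj (j k)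

/-- The conjugate exponent `p*` of `p ∈ [1,∞]`, defined by `1/p + 1/p* = 1`. -/
def conjExp (p : ℝ≥0∞) : ℝ≥0∞ := (1 - 1/p)⁻¹


lemma ksz_abs_affine (a b y : ℝ) : ∃ z : ℤ, |(z : ℝ) - y| ≤ 1 ∧ |a + b * y| ≤ |a + b * z| := by
  have h1 := Int.floor_le y
  have h2 := Int.lt_floor_add_one y
  by_cases h : |a + b * y| ≤ |a + b * (⌊y⌋ : ℤ)|
  · exact ⟨⌊y⌋, by rw [abs_le]; constructor <;> linarith, h⟩
  · refine ⟨⌊y⌋ + 1, by push_cast; rw [abs_le]; constructor <;> linarith, ?_⟩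
    push_cast
    push Not at h
    by_contra h'
    push Not at h'
    set f : ℝ := (⌊y⌋ : ℝ)
    have e : a + b * y = (1 - (y - f)) * (a + b * f) + (y - f) * (a + b * (f + 1)) := by ring
    have : |a + b * y| ≤ (1 - (y - f)) * |a + b * f| + (y - f) * |a + b * (f + 1)| := by
      conv_lhs => rw [e]
      refine (abs_add_le _ _).trans ?_
      rw [abs_mul, abs_mul, abs_of_nonneg (by linarith : 0 ≤ 1 - (y - f)),
        abs_of_nonneg (by linarith : 0 ≤ y - f)]
    nlinarith

lemma ksz_round {ι : Type} [Fintype ι] [DecidableEq ι] (f : (ι → ℝ) → ℝ)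
    (hf : ∀ x i, ∃ a b : ℝ, ∀ t, f (Function.update x i t) = a + b * t) (x : ι → ℝ) :
    ∃ z : ι → ℤ, (∀ i, |(z i : ℝ) - x i| ≤ 1) ∧ |f x| ≤ |f (fun i => (z i : ℝ))| := by
  have key : ∀ S : Finset ι, ∃ z : ι → ℝ, (∀ i, |z i - x i| ≤ 1) ∧
      (∀ i ∈ S, ∃ w : ℤ, z i = w) ∧ (∀ i ∉ S, z i = x i) ∧ |f x| ≤ |f z| := by
    intro S
    induction S using Finset.induction_on with
    | empty => exact ⟨x, by simp, by simp, by simp, le_rfl⟩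
    | insert i S hi ih =>
      obtain ⟨z, h1, h2, h4, h3⟩ := ih
      obtain ⟨a, b, hab⟩ := hf z i
      obtain ⟨w, hw1, hw2⟩ := ksz_abs_affine a b (x i)
      refine ⟨Function.update z i w, ?_, ?_, ?_, ?_⟩
      · intro j
        by_cases hj : j = i
        · subst hj; simpa using hw1
        · simpa [hj] using h1 j
      · intro j hj
        by_cases hji : j = i
        · subst hji; exact ⟨w, by simp⟩
        · simpa [hji] using h2 j ((Finset.mem_insert.1 hj).resolve_left hji)
      · intro j hj
        have hji : j ≠ i := fun h => hj (by simp [h])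
        simpa [hji] using h4 j (fun h => hj (by simp [h]))
      · rw [hab w]
        refine h3.trans ?_
        have := hab (z i)
        rw [Function.update_eq_self] at this
        rw [this, h4 i hi]; exact hw2
  obtain ⟨z, h1, h2, -, h3⟩ := key Finset.univ
  choose w hw using fun i => h2 i (Finset.mem_univ i)
  refine ⟨w, fun i => by rw [← hw i]; exact h1 i, ?_⟩
  have : (fun i => (w i : ℝ)) = z := by ext i; exact (hw i).symm
  rw [this]; exact h3

lemma ksz_summable : Summable (fun z : ℤ => Real.exp (-(z : ℝ) ^ 2)) := by
  have hg : Summable (fun n : ℕ => Real.exp (-(n : ℝ))) := by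
    simpa using Real.summable_exp_neg_nat
  have : Summable (fun n : ℕ => Real.exp (-(n : ℝ) ^ 2)) := by
    refine Summable.of_nonneg_of_le (fun n => (Real.exp_pos _).le) (fun n => ?_) hg
    apply Real.exp_le_exp.2
    have : (n : ℝ) ≤ (n : ℝ) ^ 2 := by
      exact_mod_cast Nat.le_self_pow two_ne_zero n
    linarith
  apply Summable.of_nat_of_neg <;> simpa using this

lemma ksz_count : ∃ L : ℝ, 0 < L ∧ ∀ (ι : Type) [Fintype ι] [DecidableEq ι],
    ∃ Z : Finset (ι → ℤ), (∀ z : ι → ℤ, ∑ i, (z i : ℝ) ^ 2 ≤ 4 * Fintype.card ι → z ∈ Z) ∧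
      (Z.card : ℝ) ≤ Real.exp (L * Fintype.card ι) := by
  set K := ∑' z : ℤ, Real.exp (-(z : ℝ) ^ 2) with hK
  have hK1 : 1 ≤ K := by
    have := ksz_summable.le_tsum 0 (fun j _ => (Real.exp_pos _).le)
    simpa using this
  refine ⟨4 + Real.log K, by have := Real.log_nonneg hK1; linarith, ?_⟩
  intro ι _ _
  set N := Fintype.card ι
  set box : Finset (ι → ℤ) := Fintype.piFinset (fun _ => Finset.Icc (-(4 * N : ℤ)) (4 * N))
  refine ⟨box.filter (fun z => ∑ i, (z i : ℝ) ^ 2 ≤ 4 * N), ?_, ?_⟩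
  · intro z hz
    simp only [Finset.mem_filter, box, Fintype.mem_piFinset, Finset.mem_Icc]
    refine ⟨fun i => ?_, hz⟩
    have h1 : (z i : ℝ) ^ 2 ≤ 4 * N :=
      (Finset.single_le_sum (f := fun i => (z i : ℝ) ^ 2) (fun i _ => sq_nonneg _)
        (Finset.mem_univ i)).trans hz
    have h2 : (z i) ^ 2 ≤ 4 * (N : ℤ) := by exact_mod_cast h1
    constructor
    · by_contra h; nlinarith
    · by_contra h; nlinarith
  · calc ((box.filter (fun z => ∑ i, (z i : ℝ) ^ 2 ≤ 4 * N)).card : ℝ)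
        = ∑ z ∈ box.filter (fun z => ∑ i, (z i : ℝ) ^ 2 ≤ 4 * N), (1 : ℝ) := by simp
      _ ≤ ∑ z ∈ box.filter (fun z => ∑ i, (z i : ℝ) ^ 2 ≤ 4 * N),
            Real.exp (4 * N) * ∏ i, Real.exp (-(z i : ℝ) ^ 2) := by
          refine Finset.sum_le_sum fun z hz => ?_
          have := (Finset.mem_filter.1 hz).2
          rw [← Real.exp_sum, ← Real.exp_add]
          apply Real.one_le_exp
          rw [Finset.sum_neg_distrib]; linarith
      _ ≤ ∑ z ∈ box, Real.exp (4 * N) * ∏ i, Real.exp (-(z i : ℝ) ^ 2) := by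
          refine Finset.sum_le_sum_of_subset_of_nonneg (Finset.filter_subset _ _) fun z _ _ => ?_
          positivity
      _ = Real.exp (4 * N) * ∏ _i : ι, ∑ z ∈ Finset.Icc (-(4 * N : ℤ)) (4 * N),
            Real.exp (-(z : ℝ) ^ 2) := by
          rw [← Finset.mul_sum, Finset.prod_univ_sum]
      _ ≤ Real.exp (4 * N) * ∏ _i : ι, K := by
          gcongr
          exact ksz_summable.sum_le_tsum _ (fun j _ => (Real.exp_pos _).le)
      _ = Real.exp ((4 + Real.log K) * N) := by
          rw [Finset.prod_const, Finset.card_univ, add_mul, Real.exp_add, mul_comm (Real.log K),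
            Real.exp_nat_mul, Real.exp_log (by linarith)]

lemma ksz_signs {J T : Type} [Fintype J] [DecidableEq J] (Z : Finset T) (a : T → J → ℝ)
    (σ N L : ℝ) (hσ : 0 < σ) (hN : 1 ≤ N) (hL : 0 < L) (ha : ∀ t ∈ Z, ∑ j, a t j ^ 2 ≤ σ ^ 2)
    (hZ : (Z.card : ℝ) ≤ Real.exp (L * N)) :
    ∃ ε : J → ℝ, (∀ j, ε j = 1 ∨ ε j = -1) ∧
      ∀ t ∈ Z, |∑ j, ε j * a t j| ≤ (L + 2) * σ * Real.sqrt N := by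
  set s : Bool → ℝ := fun b => if b then 1 else -1
  set l := Real.sqrt N / σ with hl
  have hl0 : 0 < l := by positivity
  have avg : ∀ c : J → ℝ, ∑ e : J → Bool, Real.exp (∑ j, s (e j) * c j) ≤
      Fintype.card (J → Bool) * Real.exp ((∑ j, c j ^ 2) / 2) := by
    intro c
    calc ∑ e : J → Bool, Real.exp (∑ j, s (e j) * c j)
        = ∏ j, ∑ b, Real.exp (s b * c j) := by
          rw [Fintype.prod_sum]; simp_rw [Real.exp_sum]
      _ ≤ ∏ j, 2 * Real.exp (c j ^ 2 / 2) := by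
          refine Finset.prod_le_prod (fun j _ => by positivity) fun j _ => ?_
          have := Real.cosh_le_exp_half_sq (c j)
          rw [Real.cosh_eq] at this
          simp [s]; linarith
      _ = _ := by
          rw [Finset.prod_mul_distrib, ← Real.exp_sum, Finset.sum_div]
          simp
  set B := Real.exp (L * N) * (2 * Real.exp (N / 2)) with hB
  have tot : ∑ e : J → Bool, ∑ t ∈ Z, (Real.exp (∑ j, s (e j) * (l * a t j)) +
      Real.exp (∑ j, s (e j) * (-l * a t j))) ≤ ∑ e : J → Bool, B := by
    rw [Finset.sum_comm]
    calc _ ≤ ∑ t ∈ Z, Fintype.card (J → Bool) * (2 * Real.exp (N / 2)) := by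
          refine Finset.sum_le_sum fun t ht => ?_
          rw [Finset.sum_add_distrib]
          have h1 := avg (fun j => l * a t j)
          have h2 := avg (fun j => -l * a t j)
          have h3 : (∑ j, (l * a t j) ^ 2) ≤ N := by
            simp_rw [mul_pow]
            rw [← Finset.mul_sum]
            calc l ^ 2 * _ ≤ l ^ 2 * σ ^ 2 := by gcongr; exact ha t ht
              _ = N := by
                rw [hl, div_pow, Real.sq_sqrt (by linarith)]; field_simp
          have h4 : (∑ j, (-l * a t j) ^ 2) ≤ N := by
            simpa [neg_mul, neg_sq] using h3
          have h5 : Real.exp ((∑ j, (l * a t j) ^ 2) / 2) ≤ Real.exp (N / 2) := by gcongr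
          have h6 : Real.exp ((∑ j, (-l * a t j) ^ 2) / 2) ≤ Real.exp (N / 2) := by gcongr
          have hc : (0 : ℝ) ≤ Fintype.card (J → Bool) := by positivity
          nlinarith [mul_le_mul_of_nonneg_left h5 hc, mul_le_mul_of_nonneg_left h6 hc]
      _ ≤ _ := by
          rw [Finset.sum_const, Finset.sum_const, nsmul_eq_mul, nsmul_eq_mul, hB,
            Finset.card_univ]
          rw [mul_left_comm]
          gcongr
  obtain ⟨e, -, he⟩ := Finset.exists_le_of_sum_le (Finset.univ_nonempty) tot
  refine ⟨fun j => s (e j), fun j => by by_cases h : e j <;> simp [s, h], ?_⟩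
  intro t ht
  have h1 : Real.exp (∑ j, s (e j) * (l * a t j)) + Real.exp (∑ j, s (e j) * (-l * a t j)) ≤ B :=
    (Finset.single_le_sum (f := fun t => Real.exp (∑ j, s (e j) * (l * a t j)) +
      Real.exp (∑ j, s (e j) * (-l * a t j))) (fun t _ => by positivity) ht).trans he
  set X := ∑ j, s (e j) * a t j with hX
  have e1 : ∑ j, s (e j) * (l * a t j) = l * X := by
    rw [hX, Finset.mul_sum]; exact Finset.sum_congr rfl fun j _ => by ring
  have e2 : ∑ j, s (e j) * (-l * a t j) = -(l * X) := by
    rw [hX, Finset.mul_sum, ← Finset.sum_neg_distrib]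
    exact Finset.sum_congr rfl fun j _ => by ring
  rw [e1, e2] at h1
  have hB2 : B ≤ Real.exp ((L + 2) * N) := by
    have : (2 : ℝ) ≤ Real.exp 1 := by have := Real.add_one_le_exp (1 : ℝ); linarith
    calc B ≤ Real.exp (L * N) * (Real.exp 1 * Real.exp (N / 2)) := by rw [hB]; gcongr
      _ = Real.exp (L * N + (1 + N / 2)) := by rw [Real.exp_add, Real.exp_add]
      _ ≤ _ := by apply Real.exp_le_exp.2; nlinarith
  have h2 : l * X ≤ (L + 2) * N := by
    rw [← Real.exp_le_exp]; linarith [Real.exp_pos (-(l * X))]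
  have h3 : -(l * X) ≤ (L + 2) * N := by
    rw [← Real.exp_le_exp]; linarith [Real.exp_pos (l * X)]
  have h4 : l * |X| ≤ (L + 2) * N := by
    rw [← abs_of_pos hl0, ← abs_mul, abs_le]; constructor <;> linarith
  have h5 : l * ((L + 2) * σ * Real.sqrt N) = (L + 2) * N := by
    rw [hl]; field_simp; rw [Real.sq_sqrt (by linarith)]
  rw [← h5] at h4
  exact le_of_mul_le_mul_left h4 hl0

lemma ksz_affine {m : ℕ} {n : Fin m → ℕ} (ε : (∀ k, Fin (n k)) → ℝ)
    (x : (Σ k, Fin (n k)) → ℝ) (i : Σ k, Fin (n k)) :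
    ∃ a b : ℝ, ∀ t, ∑ j : ∀ k, Fin (n k), ε j * ∏ k, Function.update x i t ⟨k, j k⟩ = a + b * t := by
  obtain ⟨k, i⟩ := i
  refine ⟨∑ j : ∀ k, Fin (n k), (if j k = i then 0 else ε j * ∏ k, x ⟨k, j k⟩),
    ∑ j : ∀ k, Fin (n k), (if j k = i then ε j * ∏ k' ∈ Finset.univ.erase k, x ⟨k', j k'⟩ else 0),
    fun t => ?_⟩
  rw [Finset.sum_mul, ← Finset.sum_add_distrib]
  refine Finset.sum_congr rfl fun j _ => ?_
  have hne : ∀ k', k' ≠ k → Function.update x ⟨k, i⟩ t ⟨k', j k'⟩ = x ⟨k', j k'⟩ := by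
    intro k' h
    rw [Function.update_of_ne]
    intro h'
    exact h (congrArg Sigma.fst h')
  by_cases h : j k = i
  · simp only [h, if_true]
    rw [← Finset.mul_prod_erase Finset.univ _ (Finset.mem_univ k), h, Function.update_self,
      Finset.prod_congr rfl (fun k' hk' => hne k' (Finset.ne_of_mem_erase hk'))]
    ring
  · simp only [h, if_false]
    rw [zero_mul, add_zero]
    congr 1
    refine Finset.prod_congr rfl fun k' _ => ?_
    by_cases hk : k' = k
    · subst hk
      rw [Function.update_of_ne]
      intro h'
      simp at h'
      exact h h'
    · exact hne k' hk

lemma ksz_real (m : ℕ) (hm : 0 < m) : ∃ C : ℝ, 1 ≤ C ∧ ∀ n : Fin m → ℕ, (∀ k, 0 < n k) →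
    ∃ ε : (∀ k, Fin (n k)) → ℝ, (∀ j, ε j = 1 ∨ ε j = -1) ∧
      ∀ x : ∀ k, Fin (n k) → ℝ, (∀ k, ∑ i, x k i ^ 2 ≤ 1) →
        |∑ j, ε j * ∏ k, x k (j k)| ≤ C * Real.sqrt (∑ k, (n k : ℝ)) := by
  obtain ⟨L, hL, hcount⟩ := ksz_count
  refine ⟨(L + 2) * 2 ^ m, ?_, ?_⟩
  · have : (1 : ℝ) ≤ 2 ^ m := one_le_pow₀ (by norm_num)
    nlinarith
  intro n hn
  set N : ℝ := ∑ k, (n k : ℝ) with hN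
  obtain ⟨Z, hZ1, hZ2⟩ := hcount (Σ k, Fin (n k))
  have hcard : (Fintype.card (Σ k, Fin (n k)) : ℝ) = N := by simp [hN]
  rw [hcard] at hZ1 hZ2
  have hn' : ∀ k, (1 : ℝ) ≤ n k := fun k => by exact_mod_cast hn k
  have hN1 : 1 ≤ N := (hn' ⟨0, hm⟩).trans
    (Finset.single_le_sum (f := fun k => (n k : ℝ)) (fun k _ => by positivity)
      (Finset.mem_univ (⟨0, hm⟩ : Fin m)))
  set Q : ℝ := ∏ k, Real.sqrt (n k) with hQ
  have hQ0 : 0 < Q := Finset.prod_pos fun k _ => Real.sqrt_pos.2 (by linarith [hn' k])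
  obtain ⟨ε, hε, hb⟩ := ksz_signs
    (Z.filter fun z => ∀ k, ∑ i : Fin (n k), (z ⟨k, i⟩ : ℝ) ^ 2 ≤ 4 * n k)
    (fun z (j : ∀ k, Fin (n k)) => ∏ k, (z ⟨k, j k⟩ : ℝ)) (2 ^ m * Q) N L (by positivity) hN1 hL
    (by
      intro z hz
      have hz := (Finset.mem_filter.1 hz).2
      simp_rw [← Finset.prod_pow]
      rw [← Fintype.prod_sum (fun k (i : Fin (n k)) => (z ⟨k, i⟩ : ℝ) ^ 2)]
      calc _ ≤ ∏ k, (4 * (n k : ℝ)) :=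
            Finset.prod_le_prod (fun k _ => by positivity) fun k _ => hz k
        _ = _ := by
          rw [Finset.prod_mul_distrib, mul_pow, hQ, ← Finset.prod_pow]
          simp only [Finset.prod_const, Finset.card_univ, Fintype.card_fin, Nat.cast_nonneg,
            Real.sq_sqrt]
          rw [← pow_mul, mul_comm m 2, pow_mul]; norm_num)
    (le_trans (by exact_mod_cast Finset.card_filter_le _ _) hZ2)
  refine ⟨ε, hε, fun x hx => ?_⟩
  obtain ⟨z, hz1, hz2⟩ := ksz_round
    (fun y : (Σ k, Fin (n k)) → ℝ => ∑ j : ∀ k, Fin (n k), ε j * ∏ k, y ⟨k, j k⟩)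
    (ksz_affine ε) (fun i => Real.sqrt (n i.1) * x i.1 i.2)
  have hblock : ∀ k, ∑ i : Fin (n k), (z ⟨k, i⟩ : ℝ) ^ 2 ≤ 4 * n k := by
    intro k
    calc ∑ i : Fin (n k), (z ⟨k, i⟩ : ℝ) ^ 2
        ≤ ∑ i : Fin (n k), (2 * (n k * x k i ^ 2) + 2) := by
          refine Finset.sum_le_sum fun i _ => ?_
          have h1 := hz1 ⟨k, i⟩
          have h2 := Real.sq_sqrt (Nat.cast_nonneg (α := ℝ) (n k))
          simp only at h1
          have h3 : ((z ⟨k, i⟩ : ℝ) - Real.sqrt (n k) * x k i) ^ 2 ≤ 1 := by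
            rw [← sq_abs]; exact pow_le_one₀ (abs_nonneg _) h1
          have h4 : (Real.sqrt (n k) * x k i) ^ 2 = n k * x k i ^ 2 := by rw [mul_pow, h2]
          nlinarith [sq_nonneg ((z ⟨k, i⟩ : ℝ) - 2 * (Real.sqrt (n k) * x k i))]
      _ = 2 * (n k * ∑ i, x k i ^ 2) + 2 * n k := by
          rw [Finset.sum_add_distrib, Finset.mul_sum, Finset.mul_sum]; simp [mul_comm]
      _ ≤ 4 * n k := by nlinarith [hx k, hn' k]
  have hmem : z ∈ Z := by
    apply hZ1
    rw [Fintype.sum_sigma, hN, Finset.mul_sum]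
    exact Finset.sum_le_sum fun k _ => hblock k
  have h := hz2.trans (hb z (Finset.mem_filter.2 ⟨hmem, hblock⟩))
  have e : ∑ j : ∀ k, Fin (n k), ε j * ∏ k, (Real.sqrt (n k) * x k (j k)) =
      Q * ∑ j : ∀ k, Fin (n k), ε j * ∏ k, x k (j k) := by
    rw [Finset.mul_sum]
    refine Finset.sum_congr rfl fun j _ => ?_
    rw [Finset.prod_mul_distrib]; ring
  simp only at h
  rw [e, abs_mul, abs_of_pos hQ0] at h
  refine le_of_mul_le_mul_left (h.trans_eq ?_) hQ0
  ring

lemma ksz_complex (m : ℕ) (hm : 0 < m) : ∃ C : ℝ, 1 ≤ C ∧ ∀ n : Fin m → ℕ, (∀ k, 0 < n k) →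
    ∃ ε : (∀ k, Fin (n k)) → ℝ, (∀ j, ε j = 1 ∨ ε j = -1) ∧
      ∀ x : ∀ k, Fin (n k) → ℂ, (∀ k, ∑ i, ‖x k i‖ ^ 2 ≤ 1) →
        ‖∑ j, (ε j : ℂ) * ∏ k, x k (j k)‖ ≤ C * Real.sqrt (∑ k, (n k : ℝ)) := by
  obtain ⟨C, hC, H⟩ := ksz_real m hm
  refine ⟨2 ^ m * C, ?_, ?_⟩
  · have : (1 : ℝ) ≤ 2 ^ m := one_le_pow₀ (by norm_num)
    nlinarith
  intro n hn
  obtain ⟨ε, hε, hb⟩ := H n hn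
  refine ⟨ε, hε, fun x hx => ?_⟩
  set w : Finset (Fin m) → ∀ k, Fin (n k) → ℝ := fun s k i =>
    if k ∈ s then (x k i).re else (x k i).im with hw
  have e : ∑ j : ∀ k, Fin (n k), (ε j : ℂ) * ∏ k, x k (j k) = ∑ s : Finset (Fin m),
      Complex.I ^ (sᶜ.card) * ((∑ j : ∀ k, Fin (n k), ε j * ∏ k, w s k (j k) : ℝ) : ℂ) := by
    push_cast
    simp_rw [Finset.mul_sum]
    rw [Finset.sum_comm]
    refine Finset.sum_congr rfl fun j _ => ?_
    have : ∀ k, x k (j k) = ((x k (j k)).re : ℂ) + ((x k (j k)).im : ℂ) * Complex.I := fun k =>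
      (Complex.re_add_im _).symm
    rw [Finset.prod_congr rfl (fun k _ => this k), Fintype.prod_add, Finset.mul_sum]
    refine Finset.sum_congr rfl fun s _ => ?_
    rw [Finset.prod_mul_distrib, Finset.prod_const, ← Finset.prod_mul_prod_compl s]
    have h1 : ∏ k ∈ s, ((w s k (j k) : ℝ) : ℂ) = ∏ k ∈ s, ((x k (j k)).re : ℂ) :=
      Finset.prod_congr rfl fun k hk => by simp [hw, hk]
    have h2 : ∏ k ∈ sᶜ, ((w s k (j k) : ℝ) : ℂ) = ∏ k ∈ sᶜ, ((x k (j k)).im : ℂ) :=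
      Finset.prod_congr rfl fun k hk => by simp [hw, Finset.mem_compl.1 hk]
    rw [h1, h2]; ring
  rw [e]
  calc _ ≤ ∑ s : Finset (Fin m), C * Real.sqrt (∑ k, (n k : ℝ)) := by
        refine norm_sum_le_of_le _ fun s _ => ?_
        rw [norm_mul, norm_pow, Complex.norm_I, one_pow, one_mul, Complex.norm_real,
          Real.norm_eq_abs]
        apply hb
        intro k
        refine (Finset.sum_le_sum fun i _ => ?_).trans (hx k)
        rw [← sq_abs]
        gcongr
        by_cases hk : k ∈ s
        · simpa [hw, hk] using Complex.abs_re_le_norm _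
        · simpa [hw, hk] using Complex.abs_im_le_norm _
    _ = _ := by simp [mul_assoc]

lemma ksz_interp {m : ℕ} {n : Fin m → ℕ} (ε : (∀ k, Fin (n k)) → ℝ)
    (hε : ∀ j, ε j = 1 ∨ ε j = -1) (D : ℝ)
    (hD : ∀ x : ∀ k, Fin (n k) → ℂ, (∀ k, ∑ i, ‖x k i‖ ^ 2 ≤ 1) →
        ‖∑ j, (ε j : ℂ) * ∏ k, x k (j k)‖ ≤ D)
    (r : ℝ) (hr0 : 0 ≤ r) (hr : r ≤ 1 / 2)
    (x : ∀ k, Fin (n k) → ℂ) (hx : ∀ k, ∑ i, ‖x k i‖ ^ (1 / (1 - r)) ≤ 1) :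
    ‖∑ j, (ε j : ℂ) * ∏ k, x k (j k)‖ ≤ D ^ (2 * r) := by
  set q := 1 / (1 - r) with hq
  have hq0 : 0 < q := by rw [hq]; apply one_div_pos.2; linarith
  have hεn : ∀ j, ‖(ε j : ℂ)‖ = 1 := fun j => by rcases hε j with h | h <;> simp [h]
  have hx1 : ∀ k i, ‖x k i‖ ≤ 1 := by
    intro k i
    have := (Finset.single_le_sum (f := fun i => ‖x k i‖ ^ q) (fun i _ => by positivity)
      (Finset.mem_univ i)).trans (hx k)
    by_contra h
    push Not at h
    exact absurd this (not_le.2 (Real.one_lt_rpow h hq0))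
  set g : ℂ → ∀ k, Fin (n k) → ℂ := fun z k i =>
    (x k i / ‖x k i‖) * Complex.exp (Real.log ‖x k i‖ * q * (1 - z / 2)) with hg
  have gn : ∀ z : ℂ, z.re < 2 → ∀ k i, ‖g z k i‖ = ‖x k i‖ ^ (q * (1 - z.re / 2)) := by
    intro z hz k i
    by_cases h : x k i = 0
    · have : q * (1 - z.re / 2) ≠ 0 := by
        apply mul_ne_zero hq0.ne'; linarith
      simp [hg, h, Real.zero_rpow this]
    · have h' : 0 < ‖x k i‖ := norm_pos_iff.2 h
      simp only [hg]
      rw [norm_mul, norm_div, Complex.norm_real, norm_norm, div_self h'.ne', one_mul,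
        Complex.norm_exp, Real.rpow_def_of_pos h']
      congr 1
      rw [← Complex.ofReal_mul, Complex.re_ofReal_mul]
      simp
      ring
  set F : ℂ → ℂ := fun z => ∑ j : ∀ k, Fin (n k), (ε j : ℂ) * ∏ k, g z k (j k) with hF
  have hdiff : Differentiable ℂ F := by
    simp only [hF, hg]
    fun_prop
  have hz : ((2 * r : ℝ) : ℂ) ∈ Complex.HadamardThreeLines.verticalClosedStrip 0 1 := by
    simp only [Complex.HadamardThreeLines.verticalClosedStrip, Set.mem_preimage, Complex.ofReal_re,
      Set.mem_Icc]
    constructor <;> linarith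
  have hmain := Complex.HadamardThreeLines.norm_le_interp_of_mem_verticalClosedStrip'
    (f := F) (a := 1) (b := D) zero_lt_one hz hdiff.diffContOnCl ?_ ?_ ?_
  · have e : F ((2 * r : ℝ) : ℂ) = ∑ j, (ε j : ℂ) * ∏ k, x k (j k) := by
      simp only [hF]
      refine Finset.sum_congr rfl fun j _ => ?_
      congr 1
      refine Finset.prod_congr rfl fun k _ => ?_
      simp only [hg]
      by_cases h : x k (j k) = 0
      · simp [h]
      have h' : 0 < ‖x k (j k)‖ := norm_pos_iff.2 h
      have h1 : (Real.log ‖x k (j k)‖ : ℂ) * q * (1 - ((2 * r : ℝ) : ℂ) / 2) =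
          ((Real.log ‖x k (j k)‖ : ℝ) : ℂ) := by
        have : q * (1 - (2 * r) / 2) = 1 := by
          rw [hq]; have : 1 - r ≠ 0 := by linarith
          field_simp
        rw [mul_assoc]
        have h2 : (q : ℂ) * (1 - ((2 * r : ℝ) : ℂ) / 2) = 1 := by exact_mod_cast this
        rw [h2, mul_one]
      rw [h1, ← Complex.ofReal_exp, Real.exp_log h', div_mul_cancel₀]
      exact_mod_cast h'.ne'
    rw [e] at hmain
    simpa using hmain
  · refine ⟨∑ _j : ∀ k, Fin (n k), (1 : ℝ), ?_⟩
    rintro _ ⟨z, hz, rfl⟩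
    simp only [Complex.HadamardThreeLines.verticalClosedStrip, Set.mem_preimage, Set.mem_Icc] at hz
    refine norm_sum_le_of_le _ fun j _ => ?_
    rw [norm_mul, hεn, one_mul, norm_prod]
    refine Finset.prod_le_one (fun k _ => norm_nonneg _) fun k _ => ?_
    rw [gn z (by linarith)]
    refine Real.rpow_le_one (norm_nonneg _) (hx1 _ _) ?_
    apply mul_nonneg hq0.le; linarith
  · intro z hz
    have hz : z.re = 0 := hz
    calc ‖F z‖ ≤ ∑ j : ∀ k, Fin (n k), ∏ k, ‖x k (j k)‖ ^ q := by
          refine norm_sum_le_of_le _ fun j _ => ?_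
          rw [norm_mul, hεn, one_mul, norm_prod]
          refine Finset.prod_le_prod (fun k _ => norm_nonneg _) fun k _ => ?_
          rw [gn z (by linarith), hz]; simp
      _ = ∏ k, ∑ i, ‖x k i‖ ^ q := by
          rw [Fintype.prod_sum]
      _ ≤ 1 := Finset.prod_le_one (fun k _ => by positivity) fun k _ => hx k
  · intro z hz
    have hz : z.re = 1 := hz
    apply hD
    intro k
    refine le_trans (le_of_eq ?_) (hx k)
    refine Finset.sum_congr rfl fun i _ => ?_
    rw [gn z (by linarith), hz, ← Real.rpow_natCast, ← Real.rpow_mul (norm_nonneg _)]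
    congr 1; push_cast; ring

lemma ksz_norm {𝕂 : Type*} [RCLike 𝕂] (p : ℝ≥0∞) (hp : 1 ≤ p) {n : ℕ} (hn : 0 < n)
    (r : ℝ) (hr : r ≤ 1 / 2) (h : r = 1 / 2 ∨ 1 - r ≤ (1 / p).toReal)
    (x : Fin n → 𝕂) (hx : lpNorm p x ≤ 1) :
    ∑ i, (‖x i‖ / (n : ℝ) ^ max ((1 : ℝ) / 2 - (1 / p).toReal) 0) ^ (1 / (1 - r)) ≤ 1 := by
  have hn1 : (1 : ℝ) ≤ n := by exact_mod_cast hn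
  have hn0 : (0 : ℝ) < n := by linarith
  by_cases htop : p = ∞
  · subst htop
    have hr2 : r = 1 / 2 := by
      rcases h with h | h
      · exact h
      · simp at h; linarith
    subst hr2
    simp only [lpNorm, if_true] at hx
    have hxi : ∀ i, ‖x i‖ ≤ 1 := fun i =>
      (le_ciSup (f := fun j => ‖x j‖) (Set.finite_range _).bddAbove i).trans hx
    have hmax : max ((1 : ℝ) / 2 - ((1 : ℝ≥0∞) / ∞).toReal) 0 = 1 / 2 := by simp
    rw [hmax, ← Real.sqrt_eq_rpow]
    calc _ ≤ ∑ _i : Fin n, (1 / (n : ℝ)) := by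
          refine Finset.sum_le_sum fun i _ => ?_
          rw [show (1 / (1 - 1 / 2) : ℝ) = 2 by norm_num, Real.rpow_two, div_pow,
            Real.sq_sqrt hn0.le]
          gcongr
          exact pow_le_one₀ (norm_nonneg _) (hxi i)
      _ = 1 := by simp; field_simp
  simp only [lpNorm, if_neg htop] at hx
  set P := p.toReal with hP
  have hP1 : 1 ≤ P := by
    rw [hP, ← ENNReal.toReal_one]; exact ENNReal.toReal_mono htop hp
  have ha : (1 / p).toReal = 1 / P := by simp [hP]
  rw [ha] at h ⊢
  have hsum : ∑ i, ‖x i‖ ^ P ≤ 1 := by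
    have h0 : 0 ≤ ∑ i, ‖x i‖ ^ P := by positivity
    by_contra hc
    push Not at hc
    exact absurd hx (not_le.2 (Real.one_lt_rpow hc (by positivity)))
  have hxi : ∀ i, ‖x i‖ ≤ 1 := by
    intro i
    have := (Finset.single_le_sum (f := fun i => ‖x i‖ ^ P) (fun i _ => by positivity)
      (Finset.mem_univ i)).trans hsum
    by_contra h
    push Not at h
    exact absurd this (not_le.2 (Real.one_lt_rpow h (by linarith)))
  by_cases hc : 1 - r ≤ 1 / P
  · refine (Finset.sum_le_sum fun i _ => ?_).trans hsum
    have hPq : P ≤ 1 / (1 - r) := by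
      rw [le_div_iff₀ (by linarith)]
      rw [le_div_iff₀ (by linarith)] at hc
      linarith
    have hcc : 1 ≤ (n : ℝ) ^ max ((1 : ℝ) / 2 - 1 / P) 0 :=
      Real.one_le_rpow hn1 (le_max_right _ _)
    have hq0 : 0 ≤ 1 / (1 - r) := by linarith
    calc (‖x i‖ / (n : ℝ) ^ max ((1 : ℝ) / 2 - 1 / P) 0) ^ (1 / (1 - r))
        ≤ ‖x i‖ ^ (1 / (1 - r)) := by
          apply Real.rpow_le_rpow (by positivity) _ hq0
          exact div_le_self (norm_nonneg _) hcc
      _ ≤ _ := Real.rpow_le_rpow_of_exponent_ge_of_imp (norm_nonneg _) (hxi i) hPq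
          (fun h0 h1 => absurd h1 (by linarith))
  · have hr2 := h.resolve_right hc
    subst hr2
    push Not at hc
    have hP2 : 2 < P := by
      rw [div_lt_iff₀ (by linarith)] at hc; linarith
    rw [max_eq_left (by linarith)]
    have hpm := Real.rpow_sum_le_const_mul_sum_rpow_of_nonneg (s := Finset.univ)
      (f := fun i => ‖x i‖ ^ 2) (p := P / 2) (by linarith) (fun i _ => by positivity)
    have e : ∀ i, (‖x i‖ ^ 2) ^ (P / 2) = ‖x i‖ ^ P := fun i => by
      rw [← Real.rpow_natCast, ← Real.rpow_mul (norm_nonneg _)]; congr 1; push_cast; ring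
    simp_rw [e] at hpm
    simp only [Finset.card_univ, Fintype.card_fin] at hpm
    have h2 : (∑ i, ‖x i‖ ^ 2) ^ (P / 2) ≤ (n : ℝ) ^ (P / 2 - 1) :=
      hpm.trans (mul_le_of_le_one_right (by positivity) hsum)
    have h3 : ∑ i, ‖x i‖ ^ 2 ≤ (n : ℝ) ^ (1 - 2 / P) := by
      have := Real.rpow_le_rpow (by positivity) h2 (by positivity : 0 ≤ 2 / P)
      rw [← Real.rpow_mul (by positivity), ← Real.rpow_mul (by positivity)] at this
      rw [show P / 2 * (2 / P) = 1 by field_simp, Real.rpow_one] at this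
      refine this.trans_eq ?_
      congr 1; field_simp
    have e2 : ∀ i, (‖x i‖ / (n : ℝ) ^ ((1 : ℝ) / 2 - 1 / P)) ^ ((1 : ℝ) / (1 - 1 / 2)) =
        ‖x i‖ ^ 2 / (n : ℝ) ^ (1 - 2 / P) := fun i => by
      rw [show (1 / (1 - 1 / 2) : ℝ) = 2 by norm_num, Real.rpow_two, div_pow, ← Real.rpow_natCast,
        ← Real.rpow_natCast, ← Real.rpow_mul (by positivity)]
      congr 2; push_cast; ring
    simp_rw [e2]
    rw [← Finset.sum_div, div_le_one (by positivity)]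
    exact h3

/-- The canonical isometric ring embedding of `𝕂` into `ℂ`. -/
def kszEmb (𝕂 : Type*) [RCLike 𝕂] : 𝕂 →+* ℂ where
  toFun z := ⟨RCLike.re z, RCLike.im z⟩
  map_one' := by apply Complex.ext <;> simp
  map_zero' := by apply Complex.ext <;> simp
  map_mul' x y := by apply Complex.ext <;> simp
  map_add' x y := by apply Complex.ext <;> simp

lemma kszEmb_norm {𝕂 : Type*} [RCLike 𝕂] (z : 𝕂) : ‖kszEmb 𝕂 z‖ = ‖z‖ := by
  have h1 : ‖kszEmb 𝕂 z‖ ^ 2 = ‖z‖ ^ 2 := by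
    rw [← Complex.normSq_eq_norm_sq, ← RCLike.normSq_eq_def', Complex.normSq_apply,
      RCLike.normSq_apply]
    rfl
  exact (sq_eq_sq₀ (norm_nonneg _) (norm_nonneg _)).1 h1

lemma ksz_exp {m : ℕ} (p : Fin m → ℝ≥0∞) (hp : ∀ k, 1 ≤ p k) (r : ℝ)
    (hr : r = (1 / ⨅ k, max 2 (conjExp (p k))).toReal) :
    0 ≤ r ∧ r ≤ 1 / 2 ∧ ∀ k, r = 1 / 2 ∨ 1 - r ≤ (1 / p k).toReal := by
  set ρ := ⨅ k, max 2 (conjExp (p k)) with hρ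
  have h2 : 2 ≤ ρ := le_iInf fun k => le_max_left _ _
  have h3 : 1 / ρ ≤ 1 / 2 := ENNReal.div_le_div_left h2 1
  have hhalf : ((1 : ℝ≥0∞) / 2) ≠ ∞ := by simp
  have hrle : r ≤ 1 / 2 := by
    rw [hr]
    have := ENNReal.toReal_mono hhalf h3
    simpa using this
  refine ⟨by rw [hr]; exact ENNReal.toReal_nonneg, hrle, fun k => ?_⟩
  have hk : ρ ≤ max 2 (conjExp (p k)) := iInf_le _ k
  have hfin : 1 / ρ ≠ ∞ := ne_top_of_le_ne_top hhalf h3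
  rcases le_max_iff.1 hk with h | h
  · left
    have : ρ = 2 := le_antisymm h h2
    rw [hr, this]; simp
  · right
    have h4 : 1 - 1 / p k ≤ 1 / ρ := by
      rw [conjExp] at h
      rw [one_div ρ]
      exact ENNReal.le_inv_iff_le_inv.1 h
    have h5 : 1 / p k ≤ 1 := by simpa using hp k
    have h6 := ENNReal.toReal_mono hfin h4
    rw [ENNReal.toReal_sub_of_le h5 ENNReal.one_ne_top, ← hr, ENNReal.toReal_one] at h6
    linarith

/-- **Kahane–Salem–Zygmund-type inequality with different dimensions (inequality (new)).**
For positive integers `m, n_1, …, n_m` and `p_1, …, p_m ∈ [1,∞]` there are a constant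
`C > 0` depending only on `m` and signs `ε_j ∈ {−1,1}` such that the `m`-linear form
`A z = ∑_j ε_j z^{(1)}_{j 1} ⋯ z^{(m)}_{j m}` satisfies
`‖A‖ ≤ C · (∑ k n_k) ^ (1/ρ) · ∏ k n_k ^ max (1/2 − 1/p_k) 0`,
with `ρ = min_k max 2 (p_k)*`. -/
theorem ksz_upper_bound_mixed_dims {𝕂 : Type*} [RCLike 𝕂] (m : ℕ) (hm : 0 < m) :
    ∃ C : ℝ, 0 < C ∧
      ∀ n : Fin m → ℕ, (∀ k, 0 < n k) → ∀ p : Fin m → ℝ≥0∞, (∀ k, 1 ≤ p k) →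
        ∃ ε : (∀ k, Fin (n k)) → 𝕂, (∀ j, ε j = 1 ∨ ε j = -1) ∧
          opNorm p (coeffForm ε) ≤
            C * (∑ k, (n k : ℝ)) ^ (1 / ⨅ k, max 2 (conjExp (p k))).toReal
              * ∏ k, (n k : ℝ) ^ max ((1 : ℝ) / 2 - (1 / p k).toReal) 0 := by
  obtain ⟨C, hC, H⟩ := ksz_complex m hm
  refine ⟨C, by linarith, fun n hn p hp => ?_⟩
  obtain ⟨ε, hε, hb⟩ := H n hn
  obtain ⟨hr0, hr, hk⟩ := ksz_exp p hp _ rfl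
  set r := (1 / ⨅ k, max 2 (conjExp (p k))).toReal
  set N : ℝ := ∑ k, (n k : ℝ) with hN
  have hN0 : 0 ≤ N := by positivity
  refine ⟨fun j => ((ε j : ℝ) : 𝕂), fun j => ?_, ?_⟩
  · rcases hε j with h | h <;> simp [h]
  have hint := ksz_interp ε hε _ hb r hr0 hr
  have hDr : (C * Real.sqrt N) ^ (2 * r) ≤ C * N ^ r := by
    rw [Real.mul_rpow (by linarith) (by positivity), Real.sqrt_eq_rpow, ← Real.rpow_mul hN0,
      show 1 / 2 * (2 * r) = r by ring]
    gcongr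
    calc C ^ (2 * r) ≤ C ^ (1 : ℝ) := Real.rpow_le_rpow_of_exponent_le hC (by linarith)
      _ = C := Real.rpow_one _
  apply Real.sSup_le
  · rintro t ⟨x, hx, rfl⟩
    set c : Fin m → ℝ := fun k => (n k : ℝ) ^ max ((1 : ℝ) / 2 - (1 / p k).toReal) 0 with hc
    have hc0 : ∀ k, 0 < c k := fun k => Real.rpow_pos_of_pos (by exact_mod_cast hn k) _
    have h1 := hint (fun k i => kszEmb 𝕂 (x k i) / (c k : ℂ)) (fun k => by
      have := ksz_norm (p k) (hp k) (hn k) r hr (hk k) (x k) (hx k)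
      simp_rw [norm_div, kszEmb_norm, Complex.norm_real, Real.norm_eq_abs, abs_of_pos (hc0 k)]
      exact this)
    have hcoe : ∀ a : ℝ, a = 1 ∨ a = -1 → kszEmb 𝕂 ((a : ℝ) : 𝕂) = (a : ℂ) := by
      rintro a (rfl | rfl) <;> simp
    have e1 : coeffForm (fun j => ((ε j : ℝ) : 𝕂)) x =
        ∑ j : ∀ k, Fin (n k), ((ε j : ℝ) : 𝕂) * ∏ k, x k (j k) := by
      simp [coeffForm, MultilinearMap.sum_apply, mul_comm]
    have e2 : kszEmb 𝕂 (coeffForm (fun j => ((ε j : ℝ) : 𝕂)) x) =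
        (∏ k, (c k : ℂ)) * ∑ j : ∀ k, Fin (n k), (ε j : ℂ) *
          ∏ k, (kszEmb 𝕂 (x k (j k)) / (c k : ℂ)) := by
      rw [e1, map_sum, Finset.mul_sum]
      refine Finset.sum_congr rfl fun j _ => ?_
      rw [map_mul, map_prod, hcoe _ (hε j), Finset.prod_div_distrib]
      have : (∏ k, (c k : ℂ)) ≠ 0 := Finset.prod_ne_zero_iff.2 fun k _ => by
        exact_mod_cast (hc0 k).ne'
      field_simp
    rw [← kszEmb_norm, e2, norm_mul, norm_prod]
    simp_rw [Complex.norm_real, Real.norm_eq_abs, abs_of_pos (hc0 _)]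
    rw [mul_comm]
    have := Finset.prod_nonneg (s := Finset.univ) fun k _ => (hc0 k).le
    exact mul_le_mul_of_nonneg_right (h1.trans hDr) this
  · positivity
end
end

section
/- The Albuquerque–Rezende conjecture is false: for m = 3, p_1 = 3/2, p_2 = p_3 = 3 (so γ := min{2, max{p_k : p_k ≤ 2}} = 3/2), there is no constant B > 0 such that every unimodular trilinear form A : ℓ_{3/2}^{n_1} × ℓ_3^{n_2} × ℓ_3^{n_3} → 𝕂 satisfies ‖A‖ ≥ B · (n_1^{1/3} + n_2^{1/3} + n_3^{1/3}) · n_2^{1/3} · n_3^{1/3} for all positive integers n_1, n_2, n_3. Equivalently: for every B > 0 there exist positive integers n_1, n_2, n_3 and a unimodular trilinear form A : ℓ_{3/2}^{n_1} × ℓ_3^{n_2} × ℓ_3^{n_3} → 𝕂 with ‖A‖ < B · (n_1^{1/3} + n_2^{1/3} + n_3^{1/3}) · n_2^{1/3} · n_3^{1/3}. -/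
open scoped BigOperators ENNReal

noncomputable section

def sgB (𝕂 : Type*) [RCLike 𝕂] (b : Bool) : 𝕂 := if b then 1 else -1

lemma norm_sgB {𝕂 : Type*} [RCLike 𝕂] (b : Bool) : ‖sgB 𝕂 b‖ = 1 := by
  cases b <;> simp [sgB]

lemma sq_pair {𝕂 : Type*} [RCLike 𝕂] (a b : 𝕂) :
    ‖a + b‖ ^ 2 + ‖-a + b‖ ^ 2 = 2 * ‖b‖ ^ 2 + 2 * ‖a‖ ^ 2 := by
  have h := parallelogram_law_with_norm 𝕂 b a
  rw [show -a + b = b - a by ring, add_comm a b]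
  nlinarith

lemma four_pair {𝕂 : Type*} [RCLike 𝕂] (a b : 𝕂) :
    ‖a + b‖ ^ 4 + ‖-a + b‖ ^ 4 ≤ 2 * ‖b‖ ^ 4 + 12 * ‖a‖ ^ 2 * ‖b‖ ^ 2 + 2 * ‖a‖ ^ 4 := by
  have h := sq_pair a b
  have h1 : ‖a + b‖ ≤ ‖a‖ + ‖b‖ := norm_add_le _ _
  have h2 : ‖-a + b‖ ≤ ‖a‖ + ‖b‖ := by simpa using norm_add_le (-a) b
  have e1 : ‖a + b‖ ^ 2 ≤ (‖a‖ + ‖b‖) ^ 2 := by gcongr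
  have e2 : ‖-a + b‖ ^ 2 ≤ (‖a‖ + ‖b‖) ^ 2 := by gcongr
  have k1 : ‖a + b‖ ^ 4 = (‖a + b‖ ^ 2) ^ 2 := by ring
  have k2 : ‖-a + b‖ ^ 4 = (‖-a + b‖ ^ 2) ^ 2 := by ring
  rw [k1, k2]
  generalize ‖a + b‖ ^ 2 = u at *
  generalize ‖-a + b‖ ^ 2 = v at *
  have hv : v = 2 * ‖b‖ ^ 2 + 2 * ‖a‖ ^ 2 - u := by linarith
  subst hv
  nlinarith [mul_nonneg (sub_nonneg.2 e1) (sub_nonneg.2 e2)]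

lemma sum_bool_succ {n : ℕ} (F : (Fin (n+1) → Bool) → ℝ) :
    ∑ s, F s = ∑ s : Fin n → Bool,
      (F (Fin.cons true s : Fin (n+1) → Bool) + F (Fin.cons false s : Fin (n+1) → Bool)) := by
  rw [← (Fin.consEquiv (fun _ : Fin (n+1) => Bool)).sum_comp, Fintype.sum_prod_type,
    Fintype.sum_bool, ← Finset.sum_add_distrib]
  rfl

lemma second_moment {𝕂 : Type*} [RCLike 𝕂] : ∀ (n : ℕ) (y : Fin n → 𝕂),
    ∑ s : Fin n → Bool, ‖∑ j, sgB 𝕂 (s j) * y j‖ ^ 2 = 2 ^ n * ∑ j, ‖y j‖ ^ 2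
  | 0, y => by simp
  | n+1, y => by
    rw [sum_bool_succ]
    have ih := second_moment n (fun j => y j.succ)
    simp only [Fin.sum_univ_succ, Fin.cons_zero, Fin.cons_succ]
    have : ∀ s : Fin n → Bool, ‖sgB 𝕂 true * y 0 + ∑ j, sgB 𝕂 (s j) * y j.succ‖ ^ 2 +
        ‖sgB 𝕂 false * y 0 + ∑ j, sgB 𝕂 (s j) * y j.succ‖ ^ 2 =
        2 * ‖∑ j, sgB 𝕂 (s j) * y j.succ‖ ^ 2 + 2 * ‖y 0‖ ^ 2 := by
      intro s
      rw [← sq_pair]; simp [sgB]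
    simp only [this, Finset.sum_add_distrib, ← Finset.mul_sum, ih]
    simp
    ring

lemma fourth_moment {𝕂 : Type*} [RCLike 𝕂] : ∀ (n : ℕ) (y : Fin n → 𝕂),
    ∑ s : Fin n → Bool, ‖∑ j, sgB 𝕂 (s j) * y j‖ ^ 4 ≤ 2 ^ n * (3 * (∑ j, ‖y j‖ ^ 2) ^ 2)
  | 0, y => by simp
  | n+1, y => by
    rw [sum_bool_succ]
    have ih := fourth_moment n (fun j => y j.succ)
    have h2 := second_moment n (fun j => y j.succ)
    simp only [Fin.sum_univ_succ, Fin.cons_zero, Fin.cons_succ]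
    have : ∀ s : Fin n → Bool, ‖sgB 𝕂 true * y 0 + ∑ j, sgB 𝕂 (s j) * y j.succ‖ ^ 4 +
        ‖sgB 𝕂 false * y 0 + ∑ j, sgB 𝕂 (s j) * y j.succ‖ ^ 4 ≤
        2 * ‖∑ j, sgB 𝕂 (s j) * y j.succ‖ ^ 4 +
        12 * ‖y 0‖ ^ 2 * ‖∑ j, sgB 𝕂 (s j) * y j.succ‖ ^ 2 + 2 * ‖y 0‖ ^ 4 := by
      intro s
      refine le_trans (le_of_eq ?_) (four_pair _ _)
      simp [sgB]
    refine (Finset.sum_le_sum fun s _ => this s).trans ?_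
    simp only [Finset.sum_add_distrib, ← Finset.mul_sum, h2]
    simp only [Finset.sum_const, Finset.card_univ, Fintype.card_pi, Fintype.card_bool,
      Finset.prod_const, Fintype.card_fin, nsmul_eq_mul]
    push_cast
    generalize (∑ j : Fin n, ‖y j.succ‖ ^ 2) = σ at *
    have : (0:ℝ) ≤ 2 ^ n * ‖y 0‖ ^ 4 := by positivity
    rw [pow_succ (2:ℝ) n]
    nlinarith

lemma third_moment {𝕂 : Type*} [RCLike 𝕂] (n : ℕ) (y : Fin n → 𝕂) :
    (∑ s : Fin n → Bool, ‖∑ j, sgB 𝕂 (s j) * y j‖ ^ 3) ^ 2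
      ≤ 3 * (2 ^ n) ^ 2 * (∑ j, ‖y j‖ ^ 2) ^ 3 := by
  have h := Finset.sum_mul_sq_le_sq_mul_sq Finset.univ
    (fun s : Fin n → Bool => ‖∑ j, sgB 𝕂 (s j) * y j‖)
    (fun s : Fin n → Bool => ‖∑ j, sgB 𝕂 (s j) * y j‖ ^ 2)
  have e : ∀ a : ℝ, a * a ^ 2 = a ^ 3 := fun a => by ring
  have e' : ∀ a : ℝ, (a ^ 2) ^ 2 = a ^ 4 := fun a => by ring
  simp only [e, e'] at h
  refine h.trans ?_
  rw [second_moment]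
  refine (mul_le_mul_of_nonneg_left (fourth_moment n y) (by positivity)).trans (le_of_eq ?_)
  ring

lemma sigma_bound {𝕂 : Type*} [RCLike 𝕂] (n : ℕ) (y : Fin n → 𝕂)
    (hy : ∑ j, ‖y j‖ ^ (3:ℝ) ≤ 1) : (∑ j, ‖y j‖ ^ 2) ^ 3 ≤ (n : ℝ) := by
  have h := Real.inner_le_Lp_mul_Lq_of_nonneg Finset.univ
    (f := fun j => ‖y j‖ ^ 2) (g := fun _ => (1:ℝ)) (p := 3/2) (q := 3)
    (by constructor <;> norm_num) (fun _ _ => by positivity) (fun _ _ => by positivity)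
  have e : ∀ j, (‖y j‖ ^ 2) ^ (3/2 : ℝ) = ‖y j‖ ^ (3:ℝ) := fun j => by
    rw [← Real.rpow_natCast, ← Real.rpow_mul (norm_nonneg _)]; norm_num
  simp only [e, mul_one, Real.one_rpow, Finset.sum_const, Finset.card_univ, Fintype.card_fin,
    nsmul_eq_mul] at h
  have h1 : (∑ j, ‖y j‖ ^ (3:ℝ)) ^ (1/(3/2):ℝ) ≤ 1 :=
    Real.rpow_le_one (by positivity) hy (by norm_num)
  have h2 : ∑ j, ‖y j‖ ^ 2 ≤ (n:ℝ) ^ (1/3:ℝ) := by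
    refine h.trans ?_
    exact mul_le_of_le_one_left (by positivity) h1
  calc _ ≤ ((n:ℝ) ^ (1/3:ℝ)) ^ 3 := by gcongr
    _ = n := by rw [← Real.rpow_natCast, ← Real.rpow_mul (by positivity)]; norm_num

def idx {n₁ n₂ n₃ : ℕ} (i : Fin n₁) (j : Fin n₂) (k : Fin n₃) : ∀ l : Fin 3, Fin (![n₁, n₂, n₃] l)
  | 0 => i
  | 1 => j
  | 2 => k

def theForm (𝕂 : Type*) [RCLike 𝕂] (n N : ℕ) (e : Fin N ≃ (Fin n → Bool)) :
    MultilinearMap 𝕂 (fun k : Fin 3 => Fin (![N, n, 1] k) → 𝕂) 𝕂 :=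
  ∑ i : Fin N, ∑ j : Fin n, (MultilinearMap.mkPiRing 𝕂 (Fin 3) (sgB 𝕂 (e i j))).compLinearMap
    fun k => LinearMap.proj (idx i j (0 : Fin 1) k)

lemma theForm_apply {𝕂 : Type*} [RCLike 𝕂] (n N : ℕ) (e : Fin N ≃ (Fin n → Bool))
    (x : ∀ k : Fin 3, Fin (![N, n, 1] k) → 𝕂) (a : Fin N → 𝕂) (b : Fin n → 𝕂) (c : Fin 1 → 𝕂)
    (ha : x 0 = a) (hb : x 1 = b) (hc : x 2 = c) :
    theForm 𝕂 n N e x = ∑ i, a i * (∑ j, sgB 𝕂 (e i j) * b j) * c 0 := by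
  subst ha hb hc
  simp only [theForm, sum_apply, MultilinearMap.compLinearMap_apply,
    MultilinearMap.mkPiRing_apply, Fin.prod_univ_three, Finset.mul_sum, Finset.sum_mul]
  refine Finset.sum_congr rfl fun i _ => Finset.sum_congr rfl fun j _ => ?_
  change (x 0 i * x 1 j * x 2 (0 : Fin 1)) * _ = _
  ring

lemma lpNorm_le_one {𝕂 : Type*} [RCLike 𝕂] {n : ℕ} (p : ℝ≥0∞) (hp : p ≠ ∞) (r : ℝ) (hr : 0 < r)
    (hpr : p.toReal = r) (x : Fin n → 𝕂) (h : lpNorm p x ≤ 1) : ∑ j, ‖x j‖ ^ r ≤ 1 := by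
  rw [lpNorm, if_neg hp, hpr] at h
  have := Real.rpow_le_one (by positivity) h hr.le
  rwa [← Real.rpow_mul (by positivity), one_div_mul_cancel hr.ne', Real.rpow_one] at this

lemma theForm_bound {𝕂 : Type*} [RCLike 𝕂] (n N : ℕ) (e : Fin N ≃ (Fin n → Bool))
    (a : Fin N → 𝕂) (b : Fin n → 𝕂) (c : Fin 1 → 𝕂)
    (ha : ∑ j, ‖a j‖ ^ (3/2:ℝ) ≤ 1) (hb : ∑ j, ‖b j‖ ^ (3:ℝ) ≤ 1)
    (hc : ∑ j, ‖c j‖ ^ (3:ℝ) ≤ 1) :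
    ‖∑ i, a i * (∑ j, sgB 𝕂 (e i j) * b j) * c 0‖ ^ 6 ≤ 3 * (2 ^ n) ^ 2 * n := by
  have hc0 : ‖c 0‖ ≤ 1 := by
    simp only [Fin.sum_univ_one] at hc
    by_contra! h
    exact absurd hc (not_le.2 (Real.one_lt_rpow h (by norm_num)))
  have h1 : ‖∑ i, a i * (∑ j, sgB 𝕂 (e i j) * b j) * c 0‖
      ≤ ∑ i, ‖a i‖ * ‖∑ j, sgB 𝕂 (e i j) * b j‖ := by
    refine (norm_sum_le _ _).trans (Finset.sum_le_sum fun i _ => ?_)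
    rw [norm_mul, norm_mul]
    exact mul_le_of_le_one_right (by positivity) hc0
  have h := Real.inner_le_Lp_mul_Lq_of_nonneg Finset.univ
    (f := fun i => ‖a i‖) (g := fun i => ‖∑ j, sgB 𝕂 (e i j) * b j‖) (p := 3/2) (q := 3)
    (by constructor <;> norm_num) (fun _ _ => by positivity) (fun _ _ => by positivity)
  have h2 : (∑ j, ‖a j‖ ^ (3/2:ℝ)) ^ (1/(3/2):ℝ) ≤ 1 :=
    Real.rpow_le_one (by positivity) ha (by norm_num)
  have h3 := (h1.trans h).trans (mul_le_of_le_one_left (by positivity) h2)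
  have h4 : (∑ i, ‖∑ j, sgB 𝕂 (e i j) * b j‖ ^ (3:ℝ))
      = ∑ s : Fin n → Bool, ‖∑ j, sgB 𝕂 (s j) * b j‖ ^ 3 := by
    rw [← e.sum_comp]
    refine Finset.sum_congr rfl fun i _ => ?_
    exact_mod_cast Real.rpow_natCast _ 3
  rw [h4] at h3
  have h5 := third_moment n b
  have h6 := sigma_bound n b hb
  have h7 : (0:ℝ) ≤ ∑ s : Fin n → Bool, ‖∑ j, sgB 𝕂 (s j) * b j‖ ^ 3 := by positivity
  generalize (∑ s : Fin n → Bool, ‖∑ j, sgB 𝕂 (s j) * b j‖ ^ 3) = T at *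
  calc _ ≤ (T ^ (1/3:ℝ)) ^ 6 := by gcongr
    _ = T ^ 2 := by
      rw [← Real.rpow_natCast, ← Real.rpow_mul h7, ← Real.rpow_natCast]; norm_num
    _ ≤ _ := h5.trans (by gcongr)

lemma theForm_single {𝕂 : Type*} [RCLike 𝕂] (n N : ℕ) (e : Fin N ≃ (Fin n → Bool))
    (a : Fin N) (b : Fin n) (c : Fin 1) :
    ‖∑ i, (Pi.single a 1 : Fin N → 𝕂) i *
      (∑ j, sgB 𝕂 (e i j) * (Pi.single b 1 : Fin n → 𝕂) j) * (Pi.single c 1 : Fin 1 → 𝕂) 0‖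
      = 1 := by
  have h : c = 0 := Subsingleton.elim _ _
  subst h
  simp [Pi.single_apply, norm_sgB]

/-- **The Albuquerque–Rezende conjecture is false.** For `m = 3`, `p₁ = 3/2`,
`p₂ = p₃ = 3` (so `γ = 3/2`), there is no `B > 0` such that every unimodular trilinear
form `A : ℓ_{3/2}^{n₁} × ℓ_3^{n₂} × ℓ_3^{n₃} → 𝕂` satisfies
`‖A‖ ≥ B (n₁^{1/3} + n₂^{1/3} + n₃^{1/3}) n₂^{1/3} n₃^{1/3}`: for every `B > 0` there are
`n₁, n₂, n₃` and a unimodular trilinear form with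
`‖A‖ < B (n₁^{1/3} + n₂^{1/3} + n₃^{1/3}) n₂^{1/3} n₃^{1/3}`. -/
theorem albuquerque_rezende_conjecture_false {𝕂 : Type*} [RCLike 𝕂] :
    ∀ B : ℝ, 0 < B →
      ∃ n₁ n₂ n₃ : ℕ, 0 < n₁ ∧ 0 < n₂ ∧ 0 < n₃ ∧
        ∃ A : MultilinearMap 𝕂 (fun k : Fin 3 => Fin (![n₁, n₂, n₃] k) → 𝕂) 𝕂,
          Unimodular A ∧
            opNorm ![3 / 2, 3, 3] A <
              B * ((n₁ : ℝ) ^ ((1 : ℝ) / 3) + (n₂ : ℝ) ^ ((1 : ℝ) / 3)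
                    + (n₃ : ℝ) ^ ((1 : ℝ) / 3))
                * (n₂ : ℝ) ^ ((1 : ℝ) / 3) * (n₃ : ℝ) ^ ((1 : ℝ) / 3) := by
  intro B hB
  obtain ⟨n, hn⟩ := exists_nat_gt (3 / B ^ 6)
  have hn0 : (0:ℝ) < n := lt_trans (by positivity) hn
  have e : Fin (2 ^ n) ≃ (Fin n → Bool) := Fintype.equivOfCardEq (by simp)
  refine ⟨2 ^ n, n, 1, by positivity, by exact_mod_cast hn0, one_pos, theForm 𝕂 n (2 ^ n) e, ?_, ?_⟩
  · intro j
    rw [theForm_apply n _ e _ (Pi.single (j 0) 1) (Pi.single (j 1) 1) (Pi.single (j 2) 1) rfl rfl rfl]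
    exact theForm_single n _ e (j 0) (j 1) (j 2)
  · have hM : opNorm ![3 / 2, 3, 3] (theForm 𝕂 n (2 ^ n) e)
        ≤ (3 * (2 ^ n) ^ 2 * n : ℝ) ^ (1/6:ℝ) := by
      refine Real.sSup_le ?_ (by positivity)
      rintro t ⟨x, hx, rfl⟩
      rw [theForm_apply n _ e x (x 0) (x 1) (x 2) rfl rfl rfl]
      have := theForm_bound n (2 ^ n) e (x 0) (x 1) (x 2)
        (lpNorm_le_one (3/2) (by finiteness) (3/2) (by norm_num) (by simp) _ (hx 0))
        (lpNorm_le_one 3 (by finiteness) 3 (by norm_num) (by simp) _ (hx 1))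
        (lpNorm_le_one 3 (by finiteness) 3 (by norm_num) (by simp) _ (hx 2))
      have h2 := Real.rpow_le_rpow (by positivity) this (show (0:ℝ) ≤ 1/6 by norm_num)
      refine le_trans (le_of_eq ?_) h2
      rw [← Real.rpow_natCast, ← Real.rpow_mul (norm_nonneg _)]; norm_num
    refine hM.trans_lt ?_
    have key : (3 * (2 ^ n) ^ 2 * n : ℝ) ^ (1/6:ℝ)
        < B * ((2:ℝ) ^ n) ^ ((1:ℝ)/3) * (n:ℝ) ^ ((1:ℝ)/3) := by
      refine lt_of_pow_lt_pow_left₀ 6 (by positivity) ?_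
      have c6 : ∀ z : ℝ, 0 ≤ z → (z ^ ((1:ℝ)/3)) ^ 6 = z ^ 2 := fun z hz => by
        rw [← Real.rpow_natCast, ← Real.rpow_mul hz, ← Real.rpow_natCast]; norm_num
      rw [mul_pow, mul_pow, c6 _ (by positivity), c6 _ (by positivity),
        ← Real.rpow_natCast, ← Real.rpow_mul (by positivity)]
      norm_num
      rw [div_lt_iff₀ (by positivity)] at hn
      have : (0:ℝ) < (2 ^ n) ^ 2 * n := by positivity
      nlinarith
    refine key.trans_le ?_
    push_cast
    rw [Real.one_rpow, mul_one]
    gcongr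
    have : (0:ℝ) ≤ (n:ℝ) ^ ((1:ℝ)/3) := by positivity
    linarith
end
end
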